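/- Let (L, α) be a multiplicative Hom-Lie algebra over F and (V, ρ, β) an (L, α)-module with β invertible. If f : L → V is a commuting linear map (ρ(α(x))(f(x)) = 0 for all x ∈ L and β∘f = f∘α), then for all x, y, u, v, w ∈ L: ρ([α(v), α(w)])( ρ(α²(u))( f([x,y]) − ρ(α(x))(f(y)) ) ) = 0. -/

import Mathlib

/-- Combinatorial core: a function of five arguments, alternating in the last three, with
the two cyclic relations, is symmetric in the first two. -/
theorem core_five {L V : Type*} [AddCommGroup V] (h2 : ∀ v : V, v + v = 0 → v = 0)
    (G : L → L → L → L → L → V)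
    (s1 : ∀ p q r s t, G p q s r t = - G p q r s t)
    (s2 : ∀ p q r s t, G p q r t s = - G p q r s t)
    (row : ∀ p a b u x, G p a b u x = G p b a u x + G p u b a x + G p x b u a)
    (rel : ∀ v w u x y, G v w u x y - G w v u x y =
      (G u v w x y - G u w v x y) + (G x v u w y - G x w u v y)
        + (G y v u x w - G y w u x v))
    (v w u x y : L) : G v w u x y - G w v u x y = 0 := by
  have key : ∀ v w u x y, - G w v u x y + G u v w x y + G x v u w y + G y v u x w = 0 := by
    intro v w u x y
    have r1 := rel v w u x y
    have r2 := rel v u w x y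
    have r3 := rel v x w u y
    have r4 := rel v y w u x
    have q1 := row v w u x y
    have q2 := row w v u x y
    have q3 := row u v w x y
    have q4 := row x v w u y
    have q5 := row y v w u x
    grind
  have k1 := key v w u x y
  have k2 := key w v u x y
  have r1 := rel v w u x y
  apply h2
  grind

/-- Lemma 4.2: for a commuting linear map `f` with `β`
invertible, `[α(v),α(w)]·α²(u)·(f([x,y]) − α(x)·f(y)) = 0`. -/
theorem homLie_commuting_map_lemma42
    {F L V : Type*} [Field F] [AddCommGroup L] [Module F L]
    [AddCommGroup V] [Module F V]
    (hchar : (2 : F) ≠ 0)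
    (bracket : L →ₗ[F] L →ₗ[F] L) (α : L →ₗ[F] L)
    (hskew : ∀ x y : L, bracket x y = - bracket y x)
    (hjac : ∀ x y z : L,
      bracket (α x) (bracket y z) + bracket (α y) (bracket z x)
        + bracket (α z) (bracket x y) = 0)
    (hmult : ∀ x y : L, α (bracket x y) = bracket (α x) (α y))
    (ρ : L →ₗ[F] V →ₗ[F] V) (β : V ≃ₗ[F] V)
    (hrep1 : ∀ (x : L) (v : V), β (ρ x v) = ρ (α x) (β v))
    (hrep2 : ∀ (x y : L) (v : V),
      ρ (bracket x y) (β v) = ρ (α x) (ρ y v) - ρ (α y) (ρ x v))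
    (f : L →ₗ[F] V)
    (hcom : ∀ x : L, ρ (α x) (f x) = 0)
    (hfα : ∀ x : L, β (f x) = f (α x)) :
    ∀ x y u v w : L,
      ρ (bracket (α v) (α w))
        (ρ (α (α u)) (f (bracket x y) - ρ (α x) (f y))) = 0 := by
  have h2 : ∀ v : V, v + v = 0 → v = 0 := by
    intro v hv
    have : (2 : F) • v = 0 := by rw [two_smul]; exact hv
    exact (smul_eq_zero.mp this).resolve_left hchar
  obtain ⟨A, hA⟩ : ∃ A : L →ₗ[F] V →ₗ[F] V, ∀ x v, β (A x v) = ρ (α x) v := by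
    refine ⟨(LinearMap.llcomp F V V V β.symm.toLinearMap).comp (ρ.comp α), ?_⟩
    intro x v
    simp
  have inj : ∀ v : V, β v = 0 → v = 0 := fun v hv => by simpa using hv
  have hβA : ∀ x v, β (A x v) = A (α x) (β v) := by
    intro x v
    apply β.injective
    rw [hA (α x), hA, hrep1]
  have hbr : ∀ x y v, A (bracket x y) v = A (α x) (A (α y) v) - A (α y) (A (α x) v) := by
    intro x y v
    apply β.injective
    obtain ⟨v, rfl⟩ := β.surjective v
    rw [hA, hmult, hrep2, map_sub, hA, hA, ← hβA, ← hβA, hA, hA]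
  have hsk : ∀ x y, A x (f y) = - A y (f x) := by
    have h0 : ∀ x, A x (f x) = 0 := fun x => inj _ (by rw [hA, hcom])
    intro x y
    have h := h0 (x + y)
    simp only [map_add, LinearMap.add_apply, h0] at h
    apply eq_neg_of_add_eq_zero_left
    rw [← h]; abel
  obtain ⟨S, hS⟩ : ∃ S : L → L → L → V, ∀ x y z,
      S x y z = A x (A y (f z)) + A y (A z (f x)) + A z (A x (f y)) := ⟨_, fun _ _ _ => rfl⟩
  have hβS : ∀ x y z, β (S x y z) = S (α x) (α y) (α z) := by
    intro x y z
    simp only [hS, map_add, hβA, hfα]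
  have S1 : ∀ x y z, S y x z = - S x y z := by
    intro x y z
    rw [hS, hS, hsk x z, hsk z y, hsk y x]
    simp only [map_neg]; abel
  have S2 : ∀ x y z, S x z y = - S x y z := by
    intro x y z
    rw [hS, hS, hsk x z, hsk z y, hsk y x]
    simp only [map_neg]; abel
  have cyc : ∀ x y z, S x y z = S z x y := by
    intro x y z
    rw [hS, hS]; abel
  obtain ⟨D, hD⟩ : ∃ D : L → L → V, ∀ x y,
      D x y = f (bracket x y) - A (α x) (f (α y)) := ⟨_, fun _ _ => rfl⟩
  have hAD : ∀ z x y, A z (D x y) = - S (α x) (α y) z := by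
    intro z x y
    rw [hD, hS, map_sub, hsk z (bracket x y), hbr, hsk (α x) z]
    simp only [map_neg]; abel
  have hSb : ∀ v w x y, S (bracket v w) (α x) (α y) =
      A (α v) (S (α w) (α x) (α y)) - A (α w) (S (α v) (α x) (α y)) := by
    intro v w x y
    have h : S (bracket v w) (α x) (α y) = - A (bracket v w) (D x y) := by
      rw [hAD, cyc (α x), neg_neg]
    rw [h, hbr, hAD, hAD, cyc (α x) (α y) (α w), cyc (α x) (α y) (α v)]
    simp only [map_neg]; abel
  have hT2 : ∀ a b u x, A (α (α a)) (S (α (α b)) (α (α u)) (α (α x))) =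
      A (α (α b)) (S (α (α a)) (α (α u)) (α (α x)))
      + A (α (α u)) (S (α (α b)) (α (α a)) (α (α x)))
      + A (α (α x)) (S (α (α b)) (α (α u)) (α (α a))) := by
    intro a b u x
    have hd : ∀ b u x, D (α b) (bracket u x) = f (bracket (α b) (bracket u x))
        + S (α (α b)) (α (α u)) (α (α x))
        - A (α (α b)) (A (α (α u)) (f (α (α x)))) := by
      intro b u x
      have e : f (bracket (α u) (α x)) = D (α u) (α x) + A (α (α u)) (f (α (α x))) := by
        rw [hD]; abel
      rw [hD, hmult, e, map_add, hAD, S2, S1]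
      abel
    have hj : D (α b) (bracket u x) + D (α u) (bracket x b) + D (α x) (bracket b u)
        = S (α (α b)) (α (α u)) (α (α x)) + S (α (α b)) (α (α u)) (α (α x)) := by
      have hf := congrArg f (hjac b u x)
      simp only [map_add, map_zero] at hf
      have c1 : S (α (α u)) (α (α x)) (α (α b)) = S (α (α b)) (α (α u)) (α (α x)) := by
        rw [S2, S1, neg_neg]
      have c2 : S (α (α x)) (α (α b)) (α (α u)) = S (α (α b)) (α (α u)) (α (α x)) := by
        rw [S1, S2, neg_neg]
      have c3 := hS (α (α b)) (α (α u)) (α (α x))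
      rw [hd, hd, hd, c1, c2]
      grind
    have hj2 := congrArg (A (α (α a))) hj
    simp only [map_add, hAD, hmult] at hj2
    have g : ∀ b u x, S (α (α b)) (bracket (α u) (α x)) (α (α a)) =
        - (A (α (α u)) (S (α (α x)) (α (α b)) (α (α a)))
          - A (α (α x)) (S (α (α u)) (α (α b)) (α (α a)))) := by
      intro b u x
      rw [S1, hSb]
    rw [g, g, g] at hj2
    have n : ∀ c p q r, A c (S q p r) = - A c (S p q r) := by
      intro c p q r; rw [S1, map_neg]
    have m : ∀ c p q r, A c (S p r q) = - A c (S p q r) := by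
      intro c p q r; rw [S2, map_neg]
    rw [← sub_eq_zero]
    apply h2
    generalize α (α a) = a at *
    generalize α (α b) = b at *
    generalize α (α u) = u at *
    generalize α (α x) = x at *
    have n1 := n b a u x
    have n2 := m b a u x
    have n3 := m b u a x
    have n4 := n b a x u
    have n5 := n b u x a
    have n6 := n u b a x
    have n7 := m u b a x
    have n8 := n u b x a
    have n9 := n x b u a
    grind
  have hT : ∀ a b u x, A a (S b u x) = A b (S a u x) + A u (S b a x) + A x (S b u a) := by
    intro a b u x
    apply β.injective
    apply β.injective
    simp only [map_add, hβA, hβS]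
    exact hT2 a b u x
  have main : ∀ v w u x y, A v (A w (S u x y)) - A w (A v (S u x y)) = 0 := by
    intro v w u x y
    apply inj
    simp only [map_sub, hβA, hβS]
    refine core_five h2 (fun v w u x y => A (α v) (A (α w) (S (α u) (α x) (α y))))
      ?_ ?_ ?_ ?_ v w u x y
    · intro p q r s t
      simp only [S1 (α r) (α s), map_neg]
    · intro p q r s t
      simp only [S2 _ (α s) (α t), map_neg]
    · intro p a b u x
      rw [hT (α a), map_add, map_add]
    · intro v w u x y
      have h := hT (bracket v w) (α u) (α x) (α y)
      have e2 : S (α u) (bracket v w) (α y) =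
          A (α v) (S (α u) (α w) (α y)) - A (α w) (S (α u) (α v) (α y)) := by
        rw [S1, hSb, S1 (α u), S1 (α u)]; simp only [map_neg]; abel
      have e3 : S (α u) (α x) (bracket v w) =
          A (α v) (S (α u) (α x) (α w)) - A (α w) (S (α u) (α x) (α v)) := by
        rw [S2, S1, hSb, S2 _ (α w), S1 (α u), S2 _ (α v), S1 (α u)]
        simp only [map_neg]; abel
      rw [hbr, hSb, e2, e3] at h
      simpa only [map_sub] using h
  intro x y u v w
  have hDe : f (bracket x y) - ρ (α x) (f y) = D x y := by
    rw [hD, ← hA, hβA, hfα]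
  rw [hDe, ← hmult, ← hA, ← hA, hbr, ← hβA, ← hβA, ← hβA, ← hβA, ← map_sub, hAD]
  simp only [map_neg]
  have := main v w (α x) (α y) (α u)
  rw [← neg_sub', this]
  simp
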